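/- Let L₀ be a τ-stable lattice with L₀ = L₀^∨ and L₂ a τ-stable lattice with L₂ = pL₂^∨ and L₂ ⊆ L₀. Then L₂ ⊂² L₀, the quotient L₀/L₂ is a 2-dimensional 𝔽-vector space, every W-submodule D with L₂ ⊆ D ⊆ L₀ and length_W(D/L₂) = 1 belongs to ℳ(𝔽), and D ↦ D/L₂ is a bijection from the set {D ∈ ℳ(𝔽) : L₂ ⊆ D ⊆ L₀} onto the set of 1-dimensional 𝔽-subspaces of L₀/L₂. -/

import Mathlib

open Pointwise

noncomputable section

variable (p : ℕ) [Fact p.Prime] (𝔽 : Type) [Field 𝔽] [IsAlgClosed 𝔽] [CharP 𝔽 p]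

/-- The Witt ring `W(𝔽)`. -/
abbrev Wp := WittVector p 𝔽

/-- The fraction field `K` of `W(𝔽)`. -/
abbrev Kp := FractionRing (Wp p 𝔽)

/-- `N₀ = K⁴`. -/
abbrev N0 := Fin 4 → Kp p 𝔽

/-- The symplectic form on `N₀`. -/
def omegaForm (x y : N0 p 𝔽) : Kp p 𝔽 :=
  x 0 * y 3 - x 3 * y 0 + x 1 * y 2 - x 2 * y 1

/-- The dual lattice of a `W`-submodule of `N₀`. -/
def dualL (D : Submodule (Wp p 𝔽) (N0 p 𝔽)) : Submodule (Wp p 𝔽) (N0 p 𝔽) where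
  carrier := {x | ∀ d ∈ D, omegaForm p 𝔽 x d ∈ (algebraMap (Wp p 𝔽) (Kp p 𝔽)).range}
  zero_mem' := by
    intro d hd
    have : omegaForm p 𝔽 0 d = 0 := by simp [omegaForm]
    rw [this]; exact zero_mem _
  add_mem' := by
    intro x y hx hy d hd
    have : omegaForm p 𝔽 (x + y) d = omegaForm p 𝔽 x d + omegaForm p 𝔽 y d := by
      simp [omegaForm]; ring
    rw [this]; exact add_mem (hx d hd) (hy d hd)
  smul_mem' := by
    intro c x hx d hd
    have : omegaForm p 𝔽 (c • x) d
        = algebraMap (Wp p 𝔽) (Kp p 𝔽) c * omegaForm p 𝔽 x d := by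
      simp [omegaForm, Algebra.smul_def]; ring
    rw [this]; exact mul_mem ⟨c, rfl⟩ (hx d hd)

variable (σ : Kp p 𝔽 ≃+* Kp p 𝔽)

/-- The semilinear map `τ` on `N₀`, applying `σ` to each coordinate. -/
def tauFun (x : N0 p 𝔽) : N0 p 𝔽 := fun i => σ (x i)

/-- The lattice `τD` generated by the image of `D` under `τ`. -/
def tauL (D : Submodule (Wp p 𝔽) (N0 p 𝔽)) : Submodule (Wp p 𝔽) (N0 p 𝔽) :=
  Submodule.span (Wp p 𝔽) (tauFun p 𝔽 σ '' D)

/-- `D` is a lattice in `N₀`: finitely generated over `W` and spanning `N₀` over `K`. -/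
def IsLattice (D : Submodule (Wp p 𝔽) (N0 p 𝔽)) : Prop :=
  D.FG ∧ Submodule.span (Kp p 𝔽) (D : Set (N0 p 𝔽)) = ⊤

/-- The length of the `W`-module `B / A` (as the Krull dimension of its submodule
lattice). -/
def relLength (A B : Submodule (Wp p 𝔽) (N0 p 𝔽)) : WithBot ℕ∞ :=
  Order.krullDim (Submodule (Wp p 𝔽) (B ⧸ (A.comap B.subtype)))

/-- `A ⊂ᵈ B` : `A ⊆ B` with colength `d`. -/
def SubD (d : ℕ) (A B : Submodule (Wp p 𝔽) (N0 p 𝔽)) : Prop :=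
  A ≤ B ∧ relLength p 𝔽 A B = (d : WithBot ℕ∞)

/-- Membership in `ℳ(𝔽)`. -/
def memM (D : Submodule (Wp p 𝔽) (N0 p 𝔽)) : Prop :=
  IsLattice p 𝔽 D ∧
  SubD p 𝔽 2 ((p : Wp p 𝔽) • dualL p 𝔽 D) D ∧
  SubD p 𝔽 2 D (dualL p 𝔽 D) ∧
  SubD p 𝔽 2 ((p : Wp p 𝔽) • dualL p 𝔽 D) (tauL p 𝔽 σ D) ∧
  SubD p 𝔽 2 (tauL p 𝔽 σ D) (dualL p 𝔽 D) ∧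
  relLength p 𝔽 D (D ⊔ tauL p 𝔽 σ D) ≤ 1

/-- `σ` is the automorphism of `K` induced by the Witt-vector Frobenius. -/
def IsWittFrobenius : Prop :=
  ∀ w : Wp p 𝔽, σ (algebraMap (Wp p 𝔽) (Kp p 𝔽) w)
    = algebraMap (Wp p 𝔽) (Kp p 𝔽) (WittVector.frobeniusEquiv p 𝔽 w)


section generic

variable {R M : Type*} [CommRing R] [AddCommGroup M] [Module R M]

/-- The relative length, as an extended natural number. -/
def genLen (A B : Submodule R M) : ℕ∞ := Module.length R (B ⧸ (A.comap B.subtype))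

theorem genLen_add {A B C : Submodule R M} (hAB : A ≤ B) (hBC : B ≤ C) :
    genLen A C = genLen A B + genLen B C := by
  unfold genLen
  have h1 : A.comap B.subtype ≤ (A.comap C.subtype).comap (Submodule.inclusion hBC) := by
    intro x hx
    exact hx
  have h2 : A.comap C.subtype ≤ B.comap C.subtype := Submodule.comap_mono hAB
  refine Module.length_eq_add_of_exact
    (Submodule.mapQ (A.comap B.subtype) (A.comap C.subtype) (Submodule.inclusion hBC) h1)
    (Submodule.factor h2) ?_ (Submodule.factor_surjective h2) ?_
  · rw [← LinearMap.ker_eq_bot, Submodule.ker_mapQ, Submodule.eq_bot_iff]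
    rintro _ ⟨x, hx, rfl⟩
    rw [Submodule.mkQ_apply, Submodule.Quotient.mk_eq_zero]
    exact hx
  · intro y
    obtain ⟨c, rfl⟩ := Submodule.Quotient.mk_surjective _ y
    constructor
    · intro hc
      have hc' : c ∈ B.comap C.subtype := (Submodule.Quotient.mk_eq_zero _).1 hc
      exact ⟨Submodule.Quotient.mk ⟨c.1, hc'⟩, rfl⟩
    · rintro ⟨z, hz⟩
      obtain ⟨b, rfl⟩ := Submodule.Quotient.mk_surjective _ z
      rw [← hz]
      exact (Submodule.Quotient.mk_eq_zero _).2 b.2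

/-- Submodules of `B/A` are submodules between `A` and `B`. -/
def genIcc {A B : Submodule R M} (hAB : A ≤ B) :
    Submodule R (B ⧸ (A.comap B.subtype)) ≃o Set.Icc A B :=
  (Submodule.comapMkQRelIso (A.comap B.subtype)).trans
    { toFun := fun N => ⟨N.1.map B.subtype, by
        have h := Submodule.map_mono (f := B.subtype) N.2
        rw [Submodule.map_comap_subtype, inf_eq_right.2 hAB] at h
        exact h, Submodule.map_subtype_le _ _⟩
      invFun := fun N => ⟨N.1.comap B.subtype, Submodule.comap_mono N.2.1⟩
      left_inv := fun N => Subtype.ext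
        (Submodule.comap_map_eq_of_injective B.subtype_injective _)
      right_inv := fun N => Subtype.ext (by
        change Submodule.map B.subtype (Submodule.comap B.subtype N.1) = N.1
        rw [Submodule.map_comap_subtype, inf_eq_right.2 N.2.2])
      map_rel_iff' := by
        intro N N'
        exact Submodule.map_le_map_iff_of_injective B.subtype_injective _ _ }

theorem genLen_eq_krullDim {A B : Submodule R M} (hAB : A ≤ B) :
    (genLen A B : WithBot ℕ∞) = Order.krullDim (Set.Icc A B) := by
  rw [genLen, Module.coe_length, Order.krullDim_eq_of_orderIso (genIcc hAB)]

theorem genLen_orderIso (e : Submodule R M ≃o Submodule R M) {A B : Submodule R M}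
    (hAB : A ≤ B) : genLen (e A) (e B) = genLen A B := by
  apply WithBot.coe_injective
  rw [genLen_eq_krullDim hAB, genLen_eq_krullDim (e.monotone hAB)]
  refine (Order.krullDim_eq_of_orderIso
    { toFun := fun N => ⟨e N.1, e.monotone N.2.1, e.monotone N.2.2⟩
      invFun := fun N => ⟨e.symm N.1, e.le_symm_apply.2 N.2.1, e.symm_apply_le.2 N.2.2⟩
      left_inv := fun N => Subtype.ext (e.symm_apply_apply _)
      right_inv := fun N => Subtype.ext (e.apply_symm_apply _)
      map_rel_iff' := by
        intro N N'
        exact e.le_iff_le }).symm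

theorem genLen_anti (f : Submodule R M → Submodule R M) (hf : Antitone f)
    {A B : Submodule R M} (hAB : A ≤ B)
    (h1 : ∀ N, A ≤ N → N ≤ B → f (f N) = N)
    (h2 : ∀ N, f B ≤ N → N ≤ f A → f (f N) = N) :
    genLen (f B) (f A) = genLen A B := by
  apply WithBot.coe_injective
  rw [genLen_eq_krullDim hAB, genLen_eq_krullDim (hf hAB),
    ← Order.krullDim_orderDual (α := Set.Icc A B)]
  have hA := h1 A le_rfl hAB
  have hB := h1 B hAB le_rfl
  refine (Order.krullDim_eq_of_orderIso (α := (Set.Icc A B)ᵒᵈ)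
    { toFun := fun N => ⟨f (OrderDual.ofDual N).1, hf (OrderDual.ofDual N).2.2,
        hf (OrderDual.ofDual N).2.1⟩
      invFun := fun N => OrderDual.toDual ⟨f N.1, hA.symm.le.trans (hf N.2.2),
        (hf N.2.1).trans hB.le⟩
      left_inv := fun N => ?_
      right_inv := fun N => Subtype.ext (h2 _ N.2.1 N.2.2)
      map_rel_iff' := ?_ }).symm
  · exact congrArg OrderDual.toDual (Subtype.ext (h1 _ (OrderDual.ofDual N).2.1
      (OrderDual.ofDual N).2.2))
  · intro N N'
    constructor
    · intro h
      have h' := hf (show f (OrderDual.ofDual N).1 ≤ f (OrderDual.ofDual N').1 from h)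
      rw [h1 _ (OrderDual.ofDual N).2.1 (OrderDual.ofDual N).2.2,
        h1 _ (OrderDual.ofDual N').2.1 (OrderDual.ofDual N').2.2] at h'
      exact h'
    · intro h
      exact hf (show (OrderDual.ofDual N').1 ≤ (OrderDual.ofDual N).1 from h)

theorem genLen_smul_basis {n : ℕ} (r : R) (L : Submodule R M)
    (b : Module.Basis (Fin n) R L) (hr : IsSimpleModule R (R ⧸ Ideal.span {r})) :
    genLen (r • L) L = n := by
  let g : L →ₗ[R] (Fin n → R ⧸ Ideal.span {r}) :=
    (LinearMap.pi fun i => (Ideal.span {r}).mkQ ∘ₗ LinearMap.proj i) ∘ₗ b.equivFun.toLinearMap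
  have hg : Function.Surjective g := by
    intro y
    choose v hv using fun i => Submodule.Quotient.mk_surjective _ (y i)
    refine ⟨b.equivFun.symm v, ?_⟩
    funext i
    change Submodule.Quotient.mk (b.equivFun (b.equivFun.symm v) i) = y i
    rw [LinearEquiv.apply_symm_apply, hv]
  have hk : LinearMap.ker g = (r • L).comap L.subtype := by
    ext x
    rw [LinearMap.mem_ker, Submodule.mem_comap]
    constructor
    · intro h
      have h' : ∀ i, ∃ a, b.equivFun x i = a * r := by
        intro i
        have := congrFun h i
        have h3 : b.equivFun x i ∈ Ideal.span {r} := (Submodule.Quotient.mk_eq_zero _).1 this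
        obtain ⟨a, ha⟩ := Ideal.mem_span_singleton'.1 h3
        exact ⟨a, ha.symm⟩
      choose a ha using h'
      have : x = r • b.equivFun.symm a := by
        apply b.equivFun.injective
        rw [map_smul, LinearEquiv.apply_symm_apply]
        funext i
        rw [ha, Pi.smul_apply, smul_eq_mul, mul_comm]
      rw [this]
      exact Submodule.smul_mem_pointwise_smul _ _ _ (b.equivFun.symm a).2
    · intro h
      obtain ⟨y, hy, hxy⟩ := h
      have : x = r • (⟨y, hy⟩ : L) := Subtype.ext hxy.symm
      rw [this]
      funext i
      refine (Submodule.Quotient.mk_eq_zero _).2 ?_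
      rw [LinearMap.proj_apply]
      refine Ideal.mem_span_singleton'.2 ⟨b.equivFun ⟨y, hy⟩ i, ?_⟩
      change _ = b.equivFun (r • (⟨y, hy⟩ : L)) i
      rw [map_smul, Pi.smul_apply, smul_eq_mul, mul_comm]
  unfold genLen
  rw [← hk, (LinearMap.quotKerEquivOfSurjective g hg).length_eq, Module.length_pi,
    Module.length_eq_one]
  simp

end generic

section witt

variable {p 𝔽}

theorem relLength_eq (A B : Submodule (Wp p 𝔽) (N0 p 𝔽)) :
    relLength p 𝔽 A B = (genLen A B : WithBot ℕ∞) := by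
  rw [relLength, genLen, Module.coe_length]

theorem relLength_eq_nat (A B : Submodule (Wp p 𝔽) (N0 p 𝔽)) (n : ℕ) :
    relLength p 𝔽 A B = (n : WithBot ℕ∞) ↔ genLen A B = n := by
  rw [relLength_eq]
  exact WithBot.coe_inj (b := (n : ℕ∞))

theorem dualL_anti : Antitone (dualL p 𝔽) := by
  intro A B h x hx d hd
  exact hx d (h hd)

theorem latticeBasis {D : Submodule (Wp p 𝔽) (N0 p 𝔽)} (hD : IsLattice p 𝔽 D) :
    ∃ (b : Module.Basis (Fin 4) (Wp p 𝔽) D) (c : Module.Basis (Fin 4) (Kp p 𝔽) (N0 p 𝔽)),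
      D = Submodule.span (Wp p 𝔽) (Set.range c) := by
  have : Submodule.IsLattice (Kp p 𝔽) D := ⟨hD.1, hD.2⟩
  have hr : Module.finrank (Wp p 𝔽) D = 4 := by
    rw [Submodule.IsLattice.finrank_of_pi (Kp p 𝔽) D]; simp
  let b : Module.Basis (Fin 4) (Wp p 𝔽) D := Module.finBasisOfFinrankEq _ _ hr
  refine ⟨b, b.extendOfIsLattice (Kp p 𝔽), ?_⟩
  have h1 : Set.range (b.extendOfIsLattice (Kp p 𝔽)) = D.subtype '' Set.range b := by
    rw [← Set.range_comp]
    congr 1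
    funext i
    simp
  rw [h1, ← Submodule.map_span, b.span_eq, Submodule.map_top, Submodule.range_subtype]

variable (p 𝔽) in
/-- The symplectic form as a bilinear form. -/
def omegaB : LinearMap.BilinForm (Kp p 𝔽) (N0 p 𝔽) :=
  LinearMap.mk₂ _ (omegaForm p 𝔽)
    (by intro x y z; simp [omegaForm]; ring)
    (by intro x y z; simp [omegaForm]; ring)
    (by intro x y z; simp [omegaForm]; ring)
    (by intro x y z; simp [omegaForm]; ring)

theorem omegaB_apply (x y : N0 p 𝔽) : omegaB p 𝔽 x y = omegaForm p 𝔽 x y := rfl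

theorem omegaForm_swap (x y : N0 p 𝔽) : omegaForm p 𝔽 x y = - omegaForm p 𝔽 y x := by
  simp [omegaForm]; ring

theorem omegaB_nondeg : (omegaB p 𝔽).Nondegenerate := by
  have key : ∀ x : N0 p 𝔽, (∀ y, omegaForm p 𝔽 x y = 0) → x = 0 := by
    intro x hx
    funext i
    have e0 := hx (Pi.single 0 1)
    have e1 := hx (Pi.single 1 1)
    have e2 := hx (Pi.single 2 1)
    have e3 := hx (Pi.single 3 1)
    simp [omegaForm] at e0 e1 e2 e3
    fin_cases i <;> simp_all
  constructor
  · intro x hx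
    exact key x hx
  · intro x hx
    refine key x fun y => ?_
    rw [omegaForm_swap, neg_eq_zero]
    exact hx y

theorem dualL_eq (D : Submodule (Wp p 𝔽) (N0 p 𝔽)) :
    dualL p 𝔽 D = (omegaB p 𝔽).dualSubmodule D := by
  ext x
  refine forall₂_congr fun d _ => ?_
  rw [Submodule.mem_one]
  rfl

theorem dualL_eq_flip (D : Submodule (Wp p 𝔽) (N0 p 𝔽)) :
    dualL p 𝔽 D = (omegaB p 𝔽).flip.dualSubmodule D := by
  ext x
  refine forall₂_congr fun d _ => ?_
  rw [Submodule.mem_one, LinearMap.BilinForm.flip_apply, omegaB_apply, omegaForm_swap, neg_mem_iff]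
  rfl

theorem dualL_dualL {D : Submodule (Wp p 𝔽) (N0 p 𝔽)} (hD : IsLattice p 𝔽 D) :
    dualL p 𝔽 (dualL p 𝔽 D) = D := by
  obtain ⟨_, c, rfl⟩ := latticeBasis hD
  rw [dualL_eq, dualL_eq_flip,
    LinearMap.BilinForm.dualSubmodule_dualSubmodule_flip_of_basis _ omegaB_nondeg]

theorem isLattice_dualL {D : Submodule (Wp p 𝔽) (N0 p 𝔽)} (hD : IsLattice p 𝔽 D) :
    IsLattice p 𝔽 (dualL p 𝔽 D) := by
  obtain ⟨_, c, rfl⟩ := latticeBasis hD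
  rw [dualL_eq, LinearMap.BilinForm.dualSubmodule_span_of_basis _ omegaB_nondeg]
  refine ⟨Submodule.fg_span (Set.finite_range _), ?_⟩
  rw [Submodule.span_span_of_tower]
  exact Module.Basis.span_eq _

theorem isLattice_between {A D B : Submodule (Wp p 𝔽) (N0 p 𝔽)} (hA : IsLattice p 𝔽 A)
    (hB : IsLattice p 𝔽 B) (hAD : A ≤ D) (hDB : D ≤ B) : IsLattice p 𝔽 D := by
  refine ⟨?_, ?_⟩
  · have : IsNoetherian (Wp p 𝔽) B := isNoetherian_of_fg_of_noetherian _ hB.1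
    exact isNoetherian_submodule.1 this D hDB
  · rw [eq_top_iff, ← hA.2]
    exact Submodule.span_mono hAD

theorem genLen_dual {A B : Submodule (Wp p 𝔽) (N0 p 𝔽)} (hA : IsLattice p 𝔽 A)
    (hB : IsLattice p 𝔽 B) (hAB : A ≤ B) :
    genLen (dualL p 𝔽 B) (dualL p 𝔽 A) = genLen A B :=
  genLen_anti _ dualL_anti hAB
    (fun _ h1 h2 => dualL_dualL (isLattice_between hA hB h1 h2))
    (fun _ h1 h2 => dualL_dualL
      (isLattice_between (isLattice_dualL hB) (isLattice_dualL hA) h1 h2))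

theorem p_ne_zero_K : (p : Kp p 𝔽) ≠ 0 := by
  have h : (p : Wp p 𝔽) ≠ 0 := (WittVector.irreducible p).ne_zero
  have := (map_ne_zero_iff _ (IsFractionRing.injective (Wp p 𝔽) (Kp p 𝔽))).2 h
  simpa using this

variable (p 𝔽) in
/-- Multiplication by `p` as a linear automorphism. -/
def pEquiv : N0 p 𝔽 ≃ₗ[Wp p 𝔽] N0 p 𝔽 :=
  (LinearEquiv.smulOfNeZero (Kp p 𝔽) (N0 p 𝔽) (p : Kp p 𝔽) p_ne_zero_K).restrictScalars (Wp p 𝔽)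

theorem pEquiv_map (D : Submodule (Wp p 𝔽) (N0 p 𝔽)) :
    Submodule.orderIsoMapComap (pEquiv p 𝔽) D = (p : Wp p 𝔽) • D := by
  have : ∀ x, pEquiv p 𝔽 x = (p : Wp p 𝔽) • x := by
    intro x
    change (p : Kp p 𝔽) • x = _
    rw [Nat.cast_smul_eq_nsmul, Nat.cast_smul_eq_nsmul]
  ext x
  rw [Submodule.mem_smul_pointwise_iff_exists]
  change (∃ y, _ ∧ _) ↔ _
  exact exists_congr fun y => and_congr Iff.rfl (by rw [← this]; rfl)

theorem genLen_p {A B : Submodule (Wp p 𝔽) (N0 p 𝔽)} (hAB : A ≤ B) :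
    genLen ((p : Wp p 𝔽) • A) ((p : Wp p 𝔽) • B) = genLen A B := by
  rw [← pEquiv_map, ← pEquiv_map, genLen_orderIso _ hAB]

theorem genLen_p_self {D : Submodule (Wp p 𝔽) (N0 p 𝔽)} (hD : IsLattice p 𝔽 D) :
    genLen ((p : Wp p 𝔽) • D) D = 4 := by
  obtain ⟨b, _, _⟩ := latticeBasis hD
  refine genLen_smul_basis (n := 4) _ D b ?_
  have : (Ideal.span {(p : Wp p 𝔽)}).IsMaximal :=
    PrincipalIdealRing.isMaximal_of_irreducible (WittVector.irreducible p)
  rw [isSimpleModule_iff_isCoatom]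
  exact this.out

variable {σ}

/-- Order automorphism induced by `τ`. -/
theorem tau_orderIso (hσ : IsWittFrobenius p 𝔽 σ) :
    ∃ e : Submodule (Wp p 𝔽) (N0 p 𝔽) ≃o Submodule (Wp p 𝔽) (N0 p 𝔽),
      ∀ D, e D = tauL p 𝔽 σ D := by
  let φ : Wp p 𝔽 ≃+* Wp p 𝔽 := WittVector.frobeniusEquiv p 𝔽
  let i1 : RingHomInvPair (φ : Wp p 𝔽 →+* Wp p 𝔽) (φ.symm : Wp p 𝔽 →+* Wp p 𝔽) :=
    RingHomInvPair.of_ringEquiv φ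
  let i2 : RingHomInvPair (φ.symm : Wp p 𝔽 →+* Wp p 𝔽) (φ : Wp p 𝔽 →+* Wp p 𝔽) :=
    RingHomInvPair.symm _ _
  let t : N0 p 𝔽 ≃ₛₗ[(φ : Wp p 𝔽 →+* Wp p 𝔽)] N0 p 𝔽 :=
    { toFun := tauFun p 𝔽 σ
      map_add' := fun x y => by funext i; simp [tauFun]
      map_smul' := fun c x => by
        funext i
        simp only [tauFun, Pi.smul_apply, Algebra.smul_def, map_mul]
        rw [hσ c]
        rfl
      invFun := fun x i => σ.symm (x i)
      left_inv := fun x => by funext i; simp [tauFun]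
      right_inv := fun x => by funext i; simp [tauFun] }
  refine ⟨Submodule.orderIsoMapComap t, fun D => ?_⟩
  have h : (Submodule.orderIsoMapComap t D : Submodule (Wp p 𝔽) (N0 p 𝔽)) =
      D.map (t : N0 p 𝔽 →ₛₗ[(φ : Wp p 𝔽 →+* Wp p 𝔽)] N0 p 𝔽) := rfl
  rw [h]
  exact (Submodule.span_eq
    (D.map (t : N0 p 𝔽 →ₛₗ[(φ : Wp p 𝔽 →+* Wp p 𝔽)] N0 p 𝔽))).symm

end witt

/-- Let `L₀` be a `τ`-stable lattice with `L₀ = L₀^∨`, `L₂` a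
`τ`-stable lattice with `L₂ = pL₂^∨` and `L₂ ⊆ L₀`. Then `L₂ ⊂² L₀`, the quotient
`L₀/L₂` is a 2-dimensional `𝔽`-vector space (it has `W`-length 2 and is killed by
`p`), every `W`-submodule `D` with `L₂ ⊆ D ⊆ L₀` and `length_W(D/L₂) = 1` lies in
`ℳ(𝔽)`, and `D ↦ D/L₂` is a bijection from `{D ∈ ℳ(𝔽) : L₂ ⊆ D ⊆ L₀}` onto the set
of lines in `L₀/L₂` (encoded as the set of intermediate submodules of relative
length `1`, so that bijectivity becomes an equality of sets of submodules). -/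
theorem stratum_siegel_face
    (p : ℕ) [Fact p.Prime] (hp : Odd p)
    (𝔽 : Type) [Field 𝔽] [IsAlgClosed 𝔽] [CharP 𝔽 p]
    (σ : Kp p 𝔽 ≃+* Kp p 𝔽) (hσ : IsWittFrobenius p 𝔽 σ)
    (L₀ L₂ : Submodule (Wp p 𝔽) (N0 p 𝔽))
    (hL0 : IsLattice p 𝔽 L₀) (hτ0 : tauL p 𝔽 σ L₀ = L₀) (h0 : L₀ = dualL p 𝔽 L₀)
    (hL2 : IsLattice p 𝔽 L₂) (hτ2 : tauL p 𝔽 σ L₂ = L₂)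
    (h2 : L₂ = (p : Wp p 𝔽) • dualL p 𝔽 L₂) (h20 : L₂ ≤ L₀) :
    SubD p 𝔽 2 L₂ L₀ ∧
    (∀ x ∈ L₀, (p : Wp p 𝔽) • x ∈ L₂) ∧
    (∀ D : Submodule (Wp p 𝔽) (N0 p 𝔽),
      L₂ ≤ D → D ≤ L₀ → relLength p 𝔽 L₂ D = (1 : WithBot ℕ∞) → memM p 𝔽 σ D) ∧
    {D : Submodule (Wp p 𝔽) (N0 p 𝔽) | memM p 𝔽 σ D ∧ L₂ ≤ D ∧ D ≤ L₀} =
      {D : Submodule (Wp p 𝔽) (N0 p 𝔽) |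
        L₂ ≤ D ∧ D ≤ L₀ ∧ relLength p 𝔽 L₂ D = (1 : WithBot ℕ∞)} := by
  have hpL2 : (p : Wp p 𝔽) • dualL p 𝔽 L₂ = L₂ := h2.symm
  have hd0 : dualL p 𝔽 L₀ = L₀ := h0.symm
  have h02 : L₀ ≤ dualL p 𝔽 L₂ := hd0.symm.le.trans (dualL_anti h20)
  have hpmono : ∀ {A B : Submodule (Wp p 𝔽) (N0 p 𝔽)}, A ≤ B →
      (p : Wp p 𝔽) • A ≤ (p : Wp p 𝔽) • B := by
    intro A B h
    rw [← pEquiv_map, ← pEquiv_map]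
    exact (Submodule.orderIsoMapComap (pEquiv p 𝔽)).monotone h
  have hpL0 : (p : Wp p 𝔽) • L₀ ≤ L₂ := (hpmono h02).trans hpL2.le
  have hlen : genLen L₂ L₀ = 2 := by
    have e1 : genLen ((p : Wp p 𝔽) • L₀) L₂ = genLen L₂ L₀ := by
      have a := genLen_p (p := p) (𝔽 := 𝔽) h02
      rw [hpL2] at a
      have b := genLen_dual hL2 hL0 h20
      rw [hd0] at b
      rw [a, b]
    have e2 := genLen_add hpL0 h20
    rw [genLen_p_self hL0, e1] at e2
    generalize genLen L₂ L₀ = n at e2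
    cases n with
    | top => simp at e2
    | coe n =>
      norm_cast at e2 ⊢
      omega
  have hsplit : ∀ D, L₂ ≤ D → D ≤ L₀ → genLen L₂ D + genLen D L₀ = 2 := by
    intro D h1 h3
    rw [← genLen_add h1 h3, hlen]
  have hdual : ∀ D, L₂ ≤ D → D ≤ L₀ → genLen L₀ (dualL p 𝔽 D) = genLen D L₀ := by
    intro D h1 h3
    have b := genLen_dual (isLattice_between hL2 hL0 h1 h3) hL0 h3
    rwa [hd0] at b
  have hdual2 : ∀ D, L₂ ≤ D → D ≤ L₀ →
      genLen ((p : Wp p 𝔽) • dualL p 𝔽 D) L₂ = genLen L₂ D := by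
    intro D h1 h3
    have a := genLen_p (p := p) (𝔽 := 𝔽) (dualL_anti h1)
    rw [hpL2] at a
    rw [a, genLen_dual hL2 (isLattice_between hL2 hL0 h1 h3) h1]
  have hD0 : ∀ D, D ≤ L₀ → L₀ ≤ dualL p 𝔽 D := fun D h3 => hd0.symm.le.trans (dualL_anti h3)
  have hD2 : ∀ D, L₂ ≤ D → (p : Wp p 𝔽) • dualL p 𝔽 D ≤ L₂ := fun D h1 =>
    (hpmono (dualL_anti h1)).trans hpL2.le
  have hone : ∀ D, relLength p 𝔽 L₂ D = (1 : WithBot ℕ∞) ↔ genLen L₂ D = 1 := fun D => by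
    have := relLength_eq_nat L₂ D 1
    simpa using this
  have hcancel : ∀ n : ℕ∞, 1 + n = 2 → n = 1 := by
    intro n hn
    cases n with
    | top => simp at hn
    | coe n =>
      norm_cast at hn ⊢
      omega
  have main : ∀ D : Submodule (Wp p 𝔽) (N0 p 𝔽),
      L₂ ≤ D → D ≤ L₀ → relLength p 𝔽 L₂ D = (1 : WithBot ℕ∞) → memM p 𝔽 σ D := by
    intro D h1 h3 h4
    rw [hone] at h4
    have h5 : genLen D L₀ = 1 := by
      have := hsplit D h1 h3
      rw [h4] at this
      exact hcancel _ this
    obtain ⟨e, he⟩ := tau_orderIso hσ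
    have t1 : L₂ ≤ tauL p 𝔽 σ D := by
      have := e.monotone h1
      rwa [he, he, hτ2] at this
    have t2 : tauL p 𝔽 σ D ≤ L₀ := by
      have := e.monotone h3
      rwa [he, he, hτ0] at this
    have t3 : genLen L₂ (tauL p 𝔽 σ D) = 1 := by
      have := genLen_orderIso e h1
      rwa [he, he, hτ2, h4] at this
    have t4 : genLen (tauL p 𝔽 σ D) L₀ = 1 := by
      have := genLen_orderIso e h3
      rwa [he, he, hτ0, h5] at this
    have u1 := hdual D h1 h3
    have u2 := hdual2 D h1 h3
    have two : (1 : ℕ∞) + 1 = ((2 : ℕ) : ℕ∞) := by norm_num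
    refine ⟨isLattice_between hL2 hL0 h1 h3, ⟨(hD2 D h1).trans h1, ?_⟩,
      ⟨h3.trans (hD0 D h3), ?_⟩, ⟨(hD2 D h1).trans t1, ?_⟩, ⟨t2.trans (hD0 D h3), ?_⟩, ?_⟩
    · rw [relLength_eq_nat, genLen_add (hD2 D h1) h1, u2, h4, two]
    · rw [relLength_eq_nat, genLen_add h3 (hD0 D h3), u1, h5, two]
    · rw [relLength_eq_nat, genLen_add (hD2 D h1) t1, u2, h4, t3, two]
    · rw [relLength_eq_nat, genLen_add t2 (hD0 D h3), u1, h5, t4, two]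
    · have h6 := genLen_add (le_sup_left : D ≤ D ⊔ tauL p 𝔽 σ D) (sup_le h3 t2)
      rw [h5] at h6
      rw [relLength_eq]
      have h7 : genLen D (D ⊔ tauL p 𝔽 σ D) ≤ 1 := by
        rw [h6]; exact le_self_add
      exact_mod_cast h7
  refine ⟨⟨h20, (relLength_eq_nat _ _ 2).2 hlen⟩, ?_, main, ?_⟩
  · intro x hx
    exact hpL0 (Submodule.smul_mem_pointwise_smul _ _ _ hx)
  · ext D
    constructor
    · rintro ⟨hM, h1, h3⟩
      refine ⟨h1, h3, (hone D).2 ?_⟩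
      have h4 := (relLength_eq_nat _ _ 2).1 hM.2.2.1.2
      rw [genLen_add h3 (hD0 D h3), hdual D h1 h3] at h4
      have h5 := hsplit D h1 h3
      have h6 : genLen D L₀ = 1 := by
        generalize genLen D L₀ = n at h4
        cases n with
        | top => simp at h4
        | coe n =>
          norm_cast at h4 ⊢
          omega
      rw [h6, add_comm] at h5
      exact hcancel _ h5
    · rintro ⟨h1, h3, h4⟩
      exact ⟨main D h1 h3 h4, h1, h3⟩

end
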